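/- There are no integers y, w, m, n with w ≠ 0 and n ≠ 0 satisfying simultaneously m² = y² − 8w² and n² = y² − 9w². Equivalently, the residual odd-prime branch system m² = p^{2d}ξ² − 8Δ₁², n² = p^{2d}ξ² − 9Δ₁² (with Δ₁ ≠ 0) has no integer solutions with n ≠ 0. -/

import Mathlib

theorem aux_mod16 (x : ℤ) : (x % 2 = 0 ∧ x ^ 2 % 4 = 0) ∨ (x ^ 2 % 4 = 1 ∧ (x ^ 2 % 16 = 1 ∨ x ^ 2 % 16 = 9)) := by
    have : x % 16 = 0 ∨ x % 16 = 1 ∨ x % 16 = 2 ∨ x % 16 = 3 ∨ x % 16 = 4 ∨ x % 16 = 5 ∨ x % 16 = 6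
      ∨ x % 16 = 7 ∨ x % 16 = 8 ∨ x % 16 = 9 ∨ x % 16 = 10 ∨ x % 16 = 11 ∨ x % 16 = 12
      ∨ x % 16 = 13 ∨ x % 16 = 14 ∨ x % 16 = 15 := by omega
    have hx4 : x ^ 2 % 4 = (x ^ 2 % 16) % 4 := by omega
    have hx : x ^ 2 % 16 = ((x % 16) ^ 2) % 16 := by simp [pow_two, Int.mul_emod]
    rcases this with h | h | h | h | h | h | h | h | h | h | h | h | h | h | h | h <;>
      rw [h] at hx <;> norm_num at hx <;> omega

theorem aux_core (p q r s : ℤ) (h1 : IsCoprime q r) (h2 : IsCoprime p s) (hr : r ≠ 0)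
    (h : q ^ 2 * (s ^ 2 + p ^ 2) = r ^ 2 * (s ^ 2 + 9 * p ^ 2)) :
    s ^ 2 + p ^ 2 = r ^ 2 ∧ s ^ 2 + 9 * p ^ 2 = q ^ 2 := by
  have hd : r ^ 2 ∣ s ^ 2 + p ^ 2 := by
    have : IsCoprime (r ^ 2) (q ^ 2) := (h1.symm).pow
    exact this.dvd_of_dvd_mul_left ⟨_, h⟩
  obtain ⟨k, hk⟩ := hd
  have hr2 : 0 < r ^ 2 := by positivity
  have hk2 : s ^ 2 + 9 * p ^ 2 = q ^ 2 * k := by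
    have : r ^ 2 * (s ^ 2 + 9 * p ^ 2) = r ^ 2 * (q ^ 2 * k) := by
      rw [← h, hk]; ring
    exact mul_left_cancel₀ hr2.ne' this
  have hnot : ¬ (2 ∣ p ∧ 2 ∣ s) := by
    rintro ⟨hp, hs⟩
    have := h2.isUnit_of_dvd' hp hs
    rw [Int.isUnit_iff] at this
    omega
  have hpos : 0 < s ^ 2 + p ^ 2 := by
    by_contra hc
    have hp : p = 0 := by nlinarith [sq_nonneg p, sq_nonneg s]
    have hs : s = 0 := by nlinarith [sq_nonneg p, sq_nonneg s]
    exact hnot (by simp [hp, hs])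
  have hkpos : 0 < k := by
    by_contra hc
    nlinarith
  have hk8 : k ∣ 8 := by
    obtain ⟨u, v, huv⟩ : IsCoprime (p ^ 2) (s ^ 2) := h2.pow
    refine ⟨u * (q ^ 2 - r ^ 2) + v * (9 * r ^ 2 - q ^ 2), ?_⟩
    linear_combination (-8) * huv + (-u + 9 * v) * hk + (u - v) * hk2
  have hk8' : k ≤ 8 := Int.le_of_dvd (by norm_num) hk8
  have hp4 := aux_mod16 p
  have hq4 := aux_mod16 q
  have hr4 := aux_mod16 r
  have hs4 := aux_mod16 s
  interval_cases k
  · constructor <;> linarith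
  all_goals exfalso
  all_goals clear h hpos hkpos hr2
  all_goals first
    | omega
    | (rcases hp4 with hp | hp <;> rcases hs4 with hs | hs <;>
        rcases hr4 with hr | hr <;> rcases hq4 with hq | hq <;> omega)

theorem aux_A0 (a b c d : ℤ) (hab : IsCoprime a b) (h0 : a * b ≠ 0) (h : c * d = a * b)
    (h' : a ^ 2 - b ^ 2 = 9 * c ^ 2 - d ^ 2 ∨ a ^ 2 - b ^ 2 = d ^ 2 - 9 * c ^ 2) :
    ∃ N W M Y : ℤ, N ≠ 0 ∧ W ≠ 0 ∧ N * W ∣ a * b ∧ N ^ 2 + W ^ 2 = M ^ 2 ∧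
      N ^ 2 + 9 * W ^ 2 = Y ^ 2 := by
  obtain ⟨p, q, ⟨r, hr⟩, ⟨s, hs⟩, ha⟩ := exists_dvd_and_dvd_of_dvd_mul (⟨b, h⟩ : a ∣ c * d)
  have ha0 : a ≠ 0 := left_ne_zero_of_mul h0
  have hb : b = r * s := by
    apply mul_left_cancel₀ ha0
    rw [← h, hr, hs, ha]; ring
  subst hr hs ha hb
  have hp0 : p ≠ 0 := by rintro rfl; simp at h0
  have hq0 : q ≠ 0 := by rintro rfl; simp at h0
  have hr0 : r ≠ 0 := by rintro rfl; simp at h0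
  have hs0 : s ≠ 0 := by rintro rfl; simp at h0
  have hqr : IsCoprime q r := hab.of_mul_left_right.of_mul_right_left
  have hps : IsCoprime p s := hab.of_mul_left_left.of_mul_right_right
  rcases h' with h' | h'
  · obtain ⟨e1, e2⟩ := aux_core p q r s hqr hps hr0 (by linear_combination h')
    exact ⟨s, p, r, q, hs0, hp0, ⟨q * r, by ring⟩, e1, e2⟩
  · obtain ⟨e1, e2⟩ := aux_core r s p q hps.symm hqr.symm hp0 (by linear_combination -h')
    exact ⟨q, r, p, s, hq0, hr0, ⟨p * s, by ring⟩, e1, e2⟩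

theorem aux_A (a b c d : ℤ) (hab : IsCoprime a b) (h0 : a * b ≠ 0) (h : c * d = 3 * (a * b))
    (h' : a ^ 2 - b ^ 2 = c ^ 2 - d ^ 2) :
    ∃ N W M Y : ℤ, N ≠ 0 ∧ W ≠ 0 ∧ N * W ∣ a * b ∧ N ^ 2 + W ^ 2 = M ^ 2 ∧
      N ^ 2 + 9 * W ^ 2 = Y ^ 2 := by
  rcases Int.prime_three.dvd_or_dvd (⟨_, h⟩ : (3 : ℤ) ∣ c * d) with ⟨e, rfl⟩ | ⟨e, rfl⟩
  · exact aux_A0 a b e d hab h0 (by linarith) (Or.inl (by linarith))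
  · exact aux_A0 a b e c hab h0 (by linarith) (Or.inr (by linarith))

theorem aux_mod4 (x : ℤ) : (x % 2 = 0 ∧ x ^ 2 % 4 = 0) ∨ (x % 2 = 1 ∧ x ^ 2 % 8 = 1) := by
  have : x % 8 = 0 ∨ x % 8 = 1 ∨ x % 8 = 2 ∨ x % 8 = 3 ∨ x % 8 = 4 ∨ x % 8 = 5 ∨ x % 8 = 6
      ∨ x % 8 = 7 := by omega
  have hx : x ^ 2 % 8 = ((x % 8) ^ 2) % 8 := by simp [pow_two, Int.mul_emod]
  rcases this with h | h | h | h | h | h | h | h <;>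
      rw [h] at hx <;> norm_num at hx <;> omega

theorem aux_B (a b c d : ℤ) (hab : IsCoprime a b) (h0 : a * b ≠ 0) (h : c * d = a * b)
    (hpar : a % 2 = 0 ∧ b % 2 = 1 ∨ a % 2 = 1 ∧ b % 2 = 0)
    (h' : 3 * (a ^ 2 - b ^ 2) = c ^ 2 - d ^ 2) : False := by
  obtain ⟨p, q, ⟨r, hr⟩, ⟨s, hs⟩, ha⟩ := exists_dvd_and_dvd_of_dvd_mul (⟨b, h⟩ : a ∣ c * d)
  have ha0 : a ≠ 0 := left_ne_zero_of_mul h0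
  have hb : b = r * s := by
    apply mul_left_cancel₀ ha0
    rw [← h, hr, hs, ha]; ring
  subst hr hs ha hb
  have hr0 : r ≠ 0 := by rintro rfl; simp at h0
  have hqr : IsCoprime q r := hab.of_mul_left_right.of_mul_right_left
  have hps : IsCoprime p s := hab.of_mul_left_left.of_mul_right_right
  have hE : q ^ 2 * (3 * p ^ 2 + s ^ 2) = r ^ 2 * (p ^ 2 + 3 * s ^ 2) := by linear_combination h'
  have hd : r ^ 2 ∣ 3 * p ^ 2 + s ^ 2 := by
    have : IsCoprime (r ^ 2) (q ^ 2) := (hqr.symm).pow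
    exact this.dvd_of_dvd_mul_left ⟨_, hE⟩
  obtain ⟨k, hk⟩ := hd
  have hr2 : 0 < r ^ 2 := by positivity
  have hk2 : p ^ 2 + 3 * s ^ 2 = q ^ 2 * k := by
    have : r ^ 2 * (p ^ 2 + 3 * s ^ 2) = r ^ 2 * (q ^ 2 * k) := by
      rw [← hE, hk]; ring
    exact mul_left_cancel₀ hr2.ne' this
  have hp0 : p ≠ 0 := by rintro rfl; simp at h0
  have hpos : 0 < 3 * p ^ 2 + s ^ 2 := by positivity
  have hkpos : 0 < k := by
    by_contra hc
    nlinarith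
  have hk8 : k ∣ 8 := by
    obtain ⟨u, v, huv⟩ : IsCoprime (p ^ 2) (s ^ 2) := hps.pow
    refine ⟨u * (3 * r ^ 2 - q ^ 2) + v * (3 * q ^ 2 - r ^ 2), ?_⟩
    linear_combination (-8) * huv + (3 * u - v) * hk + (- u + 3 * v) * hk2
  have hk8' : k ≤ 8 := Int.le_of_dvd (by norm_num) hk8
  have e1 : (p * q) % 2 = ((p % 2) * (q % 2)) % 2 := Int.mul_emod _ _ _
  have e2 : (r * s) % 2 = ((r % 2) * (s % 2)) % 2 := Int.mul_emod _ _ _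
  have nqr : ¬ (q % 2 = 0 ∧ r % 2 = 0) := by
    rintro ⟨hp, hs⟩
    have := hqr.isUnit_of_dvd' (Int.dvd_of_emod_eq_zero hp) (Int.dvd_of_emod_eq_zero hs)
    rw [Int.isUnit_iff] at this
    omega
  have nps : ¬ (p % 2 = 0 ∧ s % 2 = 0) := by
    rintro ⟨hp, hs⟩
    have := hps.isUnit_of_dvd' (Int.dvd_of_emod_eq_zero hp) (Int.dvd_of_emod_eq_zero hs)
    rw [Int.isUnit_iff] at this
    omega
  have hp4 := aux_mod4 p
  have hq4 := aux_mod4 q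
  have hr4 := aux_mod4 r
  have hs4 := aux_mod4 s
  clear hE h' h
  rcases hp4 with ⟨hp, hp'⟩ | ⟨hp, hp'⟩ <;> rcases hq4 with ⟨hq, hq'⟩ | ⟨hq, hq'⟩ <;>
  rcases hr4 with ⟨hr, hr'⟩ | ⟨hr, hr'⟩ <;> rcases hs4 with ⟨hs, hs'⟩ | ⟨hs, hs'⟩ <;>
  rw [hp, hq] at e1 <;> rw [hr, hs] at e2 <;> norm_num at e1 e2 <;> first
    | omega
    | (interval_cases k <;> omega)

theorem aux_main (N : ℕ) : ∀ n w m y : ℤ, (n * w).natAbs = N → n ≠ 0 → w ≠ 0 →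
    n ^ 2 + w ^ 2 = m ^ 2 → n ^ 2 + 9 * w ^ 2 = y ^ 2 → False := by
  induction N using Nat.strong_induction_on with
  | _ N ih =>
  intro n w m y hN hn hw h1 h2
  have key : ∀ n' w' m' y' : ℤ, n' ≠ 0 → w' ≠ 0 → n' ^ 2 + w' ^ 2 = m' ^ 2 →
      n' ^ 2 + 9 * w' ^ 2 = y' ^ 2 → ∀ t : ℤ, n' * w' * t = n * w → t.natAbs ≠ 1 → False := by
    intro n' w' m' y' hn' hw' e1 e2 t ht ht1
    refine ih _ ?_ n' w' m' y' rfl hn' hw' e1 e2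
    rw [← hN, ← ht, Int.natAbs_mul (n' * w')]
    have hnw : 0 < (n' * w').natAbs := Int.natAbs_pos.mpr (mul_ne_zero hn' hw')
    have ht0 : t.natAbs ≠ 0 := by
      intro h0
      rw [Int.natAbs_eq_zero] at h0
      rw [h0, mul_zero] at ht
      exact mul_ne_zero hn hw ht.symm
    have : 2 ≤ t.natAbs := by omega
    nlinarith
  -- coprime
  have hcop : IsCoprime n w := by
    rw [Int.isCoprime_iff_gcd_eq_one]
    by_contra hg
    obtain ⟨n', hn'⟩ := Int.gcd_dvd_left n w
    obtain ⟨w', hw'⟩ := Int.gcd_dvd_right n w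
    set g : ℤ := (Int.gcd n w : ℤ) with hgdef
    have hg0 : g ≠ 0 := by rintro h0; rw [h0, zero_mul] at hn'; exact hn hn'
    have hm : g ∣ m := by
      rw [← Int.pow_dvd_pow_iff two_ne_zero]
      exact ⟨n' ^ 2 + w' ^ 2, by rw [← h1, hn', hw']; ring⟩
    have hy : g ∣ y := by
      rw [← Int.pow_dvd_pow_iff two_ne_zero]
      exact ⟨n' ^ 2 + 9 * w' ^ 2, by rw [← h2, hn', hw']; ring⟩
    obtain ⟨m', hm'⟩ := hm
    obtain ⟨y', hy'⟩ := hy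
    have hg2 : g ^ 2 ≠ 0 := pow_ne_zero _ hg0
    refine key n' w' m' y' ?_ ?_ ?_ ?_ (g ^ 2) ?_ ?_
    · rintro rfl; simp at hn'; exact hn hn'
    · rintro rfl; simp at hw'; exact hw hw'
    · apply mul_left_cancel₀ hg2
      rw [hn', hw', hm'] at h1; linear_combination h1
    · apply mul_left_cancel₀ hg2
      rw [hn', hw', hy'] at h2; linear_combination h2
    · linear_combination (-w) * hn' - (g * n') * hw'
    · rw [Int.natAbs_pow, hgdef, Int.natAbs_natCast]
      intro h
      exact hg (by simpa using h)
  by_cases h3 : (3 : ℤ) ∣ n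
  · obtain ⟨k, rfl⟩ := h3
    have hy : (3 : ℤ) ∣ y := Int.prime_three.dvd_of_dvd_pow (n := 2) ⟨3 * k ^ 2 + 3 * w ^ 2, by linarith⟩
    obtain ⟨z, rfl⟩ := hy
    exact key w k z m hw (by rintro rfl; simp at hn) (by linarith) (by linarith) 3 (by ring) (by decide)
  have hcop3 : IsCoprime n (3 * w) := by
    refine IsCoprime.mul_right ?_ hcop
    exact ((Int.prime_three.coprime_iff_not_dvd).2 h3).symm
  have P1 : PythagoreanTriple n w m := by unfold PythagoreanTriple; linarith
  have P2 : PythagoreanTriple n (3 * w) y := by unfold PythagoreanTriple; linarith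
  obtain ⟨a, b, c1, -, gab, par⟩ := PythagoreanTriple.coprime_classification.1
    ⟨P1, Int.isCoprime_iff_gcd_eq_one.1 hcop⟩
  obtain ⟨c, d, c2, -, gcd', par'⟩ := PythagoreanTriple.coprime_classification.1
    ⟨P2, Int.isCoprime_iff_gcd_eq_one.1 hcop3⟩
  have hab := Int.isCoprime_iff_gcd_eq_one.2 gab
  have ha4 := aux_mod4 a
  have hb4 := aux_mod4 b
  have hc4 := aux_mod4 c
  have hd4 := aux_mod4 d
  rcases c1 with ⟨x1, x2⟩ | ⟨x1, x2⟩ <;> rcases c2 with ⟨y1, y2⟩ | ⟨y1, y2⟩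
  · have h0 : a * b ≠ 0 := by
      intro h0; apply hw; rw [x2]; linear_combination 2 * h0
    obtain ⟨N', W, M, Y, hN', hW, ⟨t, ht⟩, e1, e2⟩ := aux_A a b c d hab h0 (by linarith) (by linarith)
    refine key N' W M Y hN' hW e1 e2 (2 * t * n) ?_ ?_
    · rw [x2]; linear_combination (-2 * n) * ht
    · rw [mul_assoc, Int.natAbs_mul]
      simp
  · rw [mul_assoc] at y1; omega
  · rw [mul_assoc] at x1; omega
  · have h0 : a * b ≠ 0 := by
      intro h0; apply hn; rw [x1]; linear_combination 2 * h0
    exact aux_B a b c d hab h0 (by linarith) (by omega) (by linarith)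

theorem residual_system_no_solution :
    ¬ ∃ y w m n : ℤ, w ≠ 0 ∧ n ≠ 0 ∧ m ^ 2 = y ^ 2 - 8 * w ^ 2 ∧
      n ^ 2 = y ^ 2 - 9 * w ^ 2 := by
  rintro ⟨y, w, m, n, hw, hn, h1, h2⟩
  exact aux_main _ n w m y rfl hn hw (by linarith) (by linarith)
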